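/- arXiv:1011.1757 — 7 statements merged into one kernel-verified Lean document; each statement's English description precedes it below -/
import Mathlib

section
/- Let ψ : ℝ^m → ℝ^p be differentiable at a point x with ψ(x) ≠ 0, and let θ(y) = ‖ψ(y)‖⁻¹ • ψ(y). If the sphere centered at 0 through x is transverse at x to the fiber of ψ, i.e. there exists v ∈ ker Dψ(x) with ⟪v, x⟫ ≠ 0, then the same sphere is transverse at x to the fiber of ψ/‖ψ‖, i.e. there exists v' ∈ ker Dθ(x) with ⟪v', x⟫ ≠ 0. (This expresses the inclusion M(ψ/‖ψ‖) \ V ⊆ M(ψ) \ V of the sets of ρ-nonregular points.) -/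
open scoped RealInnerProductSpace

/-- If the sphere through `x` centered at `0` is transverse at `x` to the fiber of `ψ`
(there is `v ∈ ker Dψ(x)` with `⟪v, x⟫ ≠ 0`), then it is also transverse at `x` to the
fiber of `θ = ψ/‖ψ‖`.  This expresses `M(ψ/‖ψ‖) \ V ⊆ M(ψ) \ V`. -/
theorem transverse_fiber_normalized_of_transverse_fiber
    (m p : ℕ) (ψ : EuclideanSpace ℝ (Fin m) → EuclideanSpace ℝ (Fin p))
    (x : EuclideanSpace ℝ (Fin m)) (hdiff : DifferentiableAt ℝ ψ x) (hx : ψ x ≠ 0)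
    (h : ∃ v : EuclideanSpace ℝ (Fin m), fderiv ℝ ψ x v = 0 ∧ ⟪v, x⟫ ≠ 0) :
    ∃ v' : EuclideanSpace ℝ (Fin m),
      fderiv ℝ (fun y => ‖ψ y‖⁻¹ • ψ y) x v' = 0 ∧ ⟪v', x⟫ ≠ 0 := by
  obtain ⟨v, hv, hvx⟩ := h
  refine ⟨v, ?_, hvx⟩
  have hg : DifferentiableAt ℝ (fun z : EuclideanSpace ℝ (Fin p) => ‖z‖⁻¹ • z) (ψ x) := by
    have hn : DifferentiableAt ℝ (fun z : EuclideanSpace ℝ (Fin p) => ‖z‖) (ψ x) :=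
      differentiableAt_id.norm ℝ hx
    exact (hn.inv (norm_ne_zero_iff.mpr hx)).smul differentiableAt_id
  have hc := (hg.hasFDerivAt.comp x hdiff.hasFDerivAt).fderiv
  change fderiv ℝ ((fun z : EuclideanSpace ℝ (Fin p) => ‖z‖⁻¹ • z) ∘ ψ) x v = 0
  rw [hc, ContinuousLinearMap.comp_apply, hv, map_zero]
end

section
/- (Example 1.7, singular locus.) Let f : ℂ³ → ℂ, f(x,y,z) = conj(x)·y² + x·conj(z)². Then the singular set of f, namely Sing f = {(x,y,z) ∈ ℂ³ : the real Fréchet derivative Df(x,y,z) : ℂ³ → ℂ is not surjective}, equals {(x,y,z) : y = 0 ∧ z = 0} ∪ {(x,y,z) : x = 0 ∧ ∃ λ ∈ ℂ, |λ| = 1 ∧ y = λ·z}; in particular Sing f ⊆ f⁻¹(0), and Sing f is not contained in {0} (f has nonisolated singularity). -/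
open ComplexConjugate in
lemma fderiv_formula (f : ℂ × ℂ × ℂ → ℂ)
    (hf : ∀ p : ℂ × ℂ × ℂ,
      f p = (starRingEnd ℂ) p.1 * p.2.1 ^ 2 + p.1 * ((starRingEnd ℂ) p.2.2) ^ 2)
    (p v : ℂ × ℂ × ℂ) :
    fderiv ℝ f p v = conj v.1 * p.2.1 ^ 2 + 2 * conj p.1 * p.2.1 * v.2.1
      + v.1 * (conj p.2.2) ^ 2 + 2 * p.1 * conj p.2.2 * conj v.2.2 := by
  have h1 : HasFDerivAt (fun q : ℂ × ℂ × ℂ => q.1) (ContinuousLinearMap.fst ℝ ℂ (ℂ × ℂ)) p :=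
    hasFDerivAt_fst
  have h23 : HasFDerivAt (fun q : ℂ × ℂ × ℂ => q.2) (ContinuousLinearMap.snd ℝ ℂ (ℂ × ℂ)) p :=
    hasFDerivAt_snd
  have h2 := h23.fst
  have h3 := h23.snd
  have c1 := (Complex.conjCLE.toContinuousLinearMap.hasFDerivAt).comp p h1
  have c3 := (Complex.conjCLE.toContinuousLinearMap.hasFDerivAt).comp p h3
  have key := (c1.mul (h2.mul h2)).add (h1.mul (c3.mul c3))
  have key2 := key.congr_of_eventuallyEq (f₁ := f)
    (Filter.Eventually.of_forall fun q => by
      rw [hf q]; simp [pow_two])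
  rw [key2.fderiv]
  simp
  ring

/-- Example 1.7, singular locus: for `f(x,y,z) = x̄·y² + x·z̄²` on `ℂ³`, the singular set
`Sing f = {p : Df(p) not surjective}` equals
`{y = z = 0} ∪ {x = 0, y = λz, |λ| = 1}`; in particular `Sing f ⊆ f⁻¹(0)` and `Sing f`
is not contained in `{0}` (nonisolated singularity). -/
theorem example_mixed_function_singular_locus
    (f : ℂ × ℂ × ℂ → ℂ)
    (hf : ∀ p : ℂ × ℂ × ℂ,
      f p = (starRingEnd ℂ) p.1 * p.2.1 ^ 2 + p.1 * ((starRingEnd ℂ) p.2.2) ^ 2) :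
    {p : ℂ × ℂ × ℂ | ¬ Function.Surjective ⇑(fderiv ℝ f p)} =
        ({p : ℂ × ℂ × ℂ | p.2.1 = 0 ∧ p.2.2 = 0} ∪
          {p : ℂ × ℂ × ℂ | p.1 = 0 ∧ ∃ l : ℂ, ‖l‖ = 1 ∧ p.2.1 = l * p.2.2}) ∧
      {p : ℂ × ℂ × ℂ | ¬ Function.Surjective ⇑(fderiv ℝ f p)} ⊆ f ⁻¹' {0} ∧
      ¬ ({p : ℂ × ℂ × ℂ | ¬ Function.Surjective ⇑(fderiv ℝ f p)} ⊆ {0}) := by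
  have hD := fderiv_formula f hf
  have main : {p : ℂ × ℂ × ℂ | ¬ Function.Surjective ⇑(fderiv ℝ f p)} =
        ({p : ℂ × ℂ × ℂ | p.2.1 = 0 ∧ p.2.2 = 0} ∪
          {p : ℂ × ℂ × ℂ | p.1 = 0 ∧ ∃ l : ℂ, ‖l‖ = 1 ∧ p.2.1 = l * p.2.2}) := by
    ext ⟨x, y, z⟩
    simp only [Set.mem_ofPred_eq, Set.mem_union]
    constructor
    · intro h
      by_contra hc
      apply h
      intro v
      by_cases hx : x = 0
      · subst hx
        have hne : ‖y‖ ≠ ‖z‖ := by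
          intro he
          apply hc
          right
          refine ⟨rfl, ?_⟩
          by_cases hz : z = 0
          · subst hz
            refine ⟨1, by simp, by simpa using he⟩
          · refine ⟨y / z, ?_, by field_simp⟩
            rw [norm_div, he, div_self (by simpa using hz)]
        have hd : z ^ 2 * (starRingEnd ℂ z) ^ 2 - y ^ 2 * (starRingEnd ℂ y) ^ 2 ≠ 0 := by
          rw [← mul_pow, ← mul_pow, Complex.mul_conj', Complex.mul_conj']
          intro h0
          apply hne
          have h1 : (‖y‖ ^ 2) ^ 2 = (‖z‖ ^ 2) ^ 2 := by
            exact_mod_cast (sub_eq_zero.mp h0).symm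
          rw [← pow_mul, ← pow_mul] at h1
          exact (pow_left_inj₀ (norm_nonneg _) (norm_nonneg _) (by norm_num)).mp h1
        refine ⟨((z ^ 2 * v - y ^ 2 * starRingEnd ℂ v) /
          (z ^ 2 * (starRingEnd ℂ z) ^ 2 - y ^ 2 * (starRingEnd ℂ y) ^ 2), 0, 0), ?_⟩
        rw [hD]
        have hd' : (starRingEnd ℂ z) ^ 2 * z ^ 2 - (starRingEnd ℂ y) ^ 2 * y ^ 2 ≠ 0 := by
          convert hd using 1; ring
        simp only [map_div₀, map_sub, map_mul, map_pow, Complex.conj_conj, map_zero]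
        have he : (starRingEnd ℂ z) ^ 2 * z ^ 2 - (starRingEnd ℂ y) ^ 2 * y ^ 2
          = z ^ 2 * (starRingEnd ℂ z) ^ 2 - y ^ 2 * (starRingEnd ℂ y) ^ 2 := by ring
        rw [he]
        field_simp
        ring
      · have hx' : starRingEnd ℂ x ≠ 0 := by simpa using hx
        by_cases hy : y = 0
        · have hz : z ≠ 0 := fun hz => hc (Or.inl ⟨hy, hz⟩)
          have hz' : starRingEnd ℂ z ≠ 0 := by simpa using hz
          refine ⟨(0, 0, starRingEnd ℂ (v / (2 * x * starRingEnd ℂ z))), ?_⟩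
          rw [hD]
          simp only [Complex.conj_conj, map_zero]
          field_simp
          ring
        · refine ⟨(0, v / (2 * starRingEnd ℂ x * y), 0), ?_⟩
          rw [hD]
          simp only [map_zero]
          field_simp
          ring
    · rintro (⟨hy, hz⟩ | ⟨hx, l, hl, hy⟩) h
      · subst hy hz
        obtain ⟨v, hv⟩ := h 1
        rw [hD] at hv
        simp at hv
      · subst hx hy
        obtain ⟨v, hv⟩ := h (l * Complex.I)
        rw [hD] at hv
        have hll : l * starRingEnd ℂ l = 1 := by
          rw [Complex.mul_conj', hl]; simp
        simp only [map_zero] at hv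
        have e1 : starRingEnd ℂ v.1 * (l * z ^ 2) + v.1 * (starRingEnd ℂ l * starRingEnd ℂ z ^ 2)
            = Complex.I := by
          linear_combination (starRingEnd ℂ l) * hv +
            (Complex.I - starRingEnd ℂ v.1 * l * z ^ 2) * hll
        have e2 := congrArg (starRingEnd ℂ) e1
        simp only [map_add, map_mul, map_pow, Complex.conj_conj, Complex.conj_I] at e2
        have e3 : 2 * Complex.I = 0 := by linear_combination e2 - e1
        simp at e3
  refine ⟨main, ?_, ?_⟩
  · rw [main]
    rintro ⟨x, y, z⟩ (⟨hy, hz⟩ | ⟨hx, -⟩)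
    · dsimp only at hy hz
      simp [hf, hy, hz]
    · dsimp only at hx
      simp [hf, hx]
  · rw [main]
    intro h
    have := h (show ((1, 0, 0) : ℂ × ℂ × ℂ) ∈ _ from Or.inl ⟨rfl, rfl⟩)
    simp at this
end

section
/- (Example 4.1, singular locus.) Let f : ℝ³ → ℝ², f(x,y,z) = (y⁴ − z²·x² − x⁴, x·y). Then Sing f = {(x,y,z) ∈ ℝ³ : x = 0 ∧ y = 0}, where Sing f := {p ∈ ℝ³ : the real Fréchet derivative Df(p) : ℝ³ → ℝ² is not surjective}; in particular Sing f = f⁻¹(0). -/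
/-- Example 4.1, singular locus: for `f(x,y,z) = (y⁴ − z²x² − x⁴, xy)` the singular set
`Sing f = {p : Df(p) not surjective}` equals the `z`-axis `{x = y = 0}`; in particular
`Sing f = f⁻¹(0)`. -/
theorem example_real_mapping_singular_locus
    (f : ℝ × ℝ × ℝ → ℝ × ℝ)
    (hf : ∀ p : ℝ × ℝ × ℝ,
      f p = (p.2.1 ^ 4 - p.2.2 ^ 2 * p.1 ^ 2 - p.1 ^ 4, p.1 * p.2.1)) :
    {p : ℝ × ℝ × ℝ | ¬ Function.Surjective ⇑(fderiv ℝ f p)} =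
        {p : ℝ × ℝ × ℝ | p.1 = 0 ∧ p.2.1 = 0} ∧
      {p : ℝ × ℝ × ℝ | ¬ Function.Surjective ⇑(fderiv ℝ f p)} = f ⁻¹' {0} := by
  have hD : ∀ p v : ℝ × ℝ × ℝ, fderiv ℝ f p v =
      ((-2 * p.1 * p.2.2 ^ 2 - 4 * p.1 ^ 3) * v.1 + 4 * p.2.1 ^ 3 * v.2.1
        - 2 * p.2.2 * p.1 ^ 2 * v.2.2, p.2.1 * v.1 + p.1 * v.2.1) := by
    intro p v
    have hx : HasFDerivAt (fun q : ℝ × ℝ × ℝ => q.1)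
        (ContinuousLinearMap.fst ℝ ℝ (ℝ × ℝ)) p := hasFDerivAt_fst
    have hyz : HasFDerivAt (fun q : ℝ × ℝ × ℝ => q.2)
        (ContinuousLinearMap.snd ℝ ℝ (ℝ × ℝ)) p := hasFDerivAt_snd
    have hy := hyz.fst
    have hz := hyz.snd
    have h := (((hy.pow 4).sub ((hz.pow 2).mul (hx.pow 2))).sub (hx.pow 4)).prodMk (hx.mul hy)
    have h' : HasFDerivAt f _ p := h.congr_of_eventuallyEq (Filter.Eventually.of_forall hf)
    rw [h'.fderiv]
    ext
    · simp
      ring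
    · simp
      ring
  have h1 : {p : ℝ × ℝ × ℝ | ¬ Function.Surjective ⇑(fderiv ℝ f p)} =
        {p : ℝ × ℝ × ℝ | p.1 = 0 ∧ p.2.1 = 0} := by
    ext ⟨x, y, z⟩
    simp only [Set.mem_setOf_eq]
    constructor
    · intro h
      by_contra hne
      apply h
      have hd : 2 * x ^ 2 * z ^ 2 + 4 * x ^ 4 + 4 * y ^ 4 ≠ 0 := by
        intro h0
        apply hne
        have a1 : 0 ≤ x ^ 2 * z ^ 2 := by positivity
        have a2 : 0 ≤ x ^ 4 := by positivity
        have a3 : 0 ≤ y ^ 4 := by positivity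
        have b1 : x ^ 4 = 0 := by linarith
        have b2 : y ^ 4 = 0 := by linarith
        exact ⟨pow_eq_zero_iff (by norm_num) |>.1 b1, pow_eq_zero_iff (by norm_num) |>.1 b2⟩
      rintro ⟨s, t⟩
      refine ⟨((4 * y ^ 3 * t - s * x) / (2 * x ^ 2 * z ^ 2 + 4 * x ^ 4 + 4 * y ^ 4),
        (y * s + (2 * x * z ^ 2 + 4 * x ^ 3) * t) /
          (2 * x ^ 2 * z ^ 2 + 4 * x ^ 4 + 4 * y ^ 4), 0), ?_⟩
      rw [hD]
      generalize hd' : 2 * x ^ 2 * z ^ 2 + 4 * x ^ 4 + 4 * y ^ 4 = d at *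
      ext
      · simp only
        field_simp
        rw [← hd']
        ring
      · simp only
        field_simp
        rw [← hd']
        ring
    · rintro ⟨rfl, rfl⟩ h
      obtain ⟨v, hv⟩ := h (0, 1)
      rw [hD] at hv
      simp at hv
  refine ⟨h1, h1.trans ?_⟩
  ext ⟨x, y, z⟩
  simp only [Set.mem_setOf_eq, Set.mem_preimage, Set.mem_singleton_iff, hf, Prod.mk_eq_zero]
  constructor
  · rintro ⟨rfl, rfl⟩
    simp
  · rintro ⟨h, hxy⟩
    rcases mul_eq_zero.1 hxy with rfl | rfl
    · simpa using h
    · refine ⟨?_, rfl⟩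
      have a1 : 0 ≤ z ^ 2 * x ^ 2 := by positivity
      have a2 : 0 ≤ x ^ 4 := by positivity
      have b1 : x ^ 4 = 0 := by linarith
      exact pow_eq_zero_iff (by norm_num) |>.1 b1
end

section
/- (Example 4.1, Milnor set condition.) Let f : ℝ³ → ℝ², f(x,y,z) = (y⁴ − z²·x² − x⁴, x·y), with V = f⁻¹(0) = {x = y = 0}. Let M denote the set of points (x,y,z) ∈ ℝ³ with (x,y) ≠ (0,0) at which the position vector lies in the span of the gradients of the components of f, i.e. ∃ a, b ∈ ℝ such that (x, y, z) = a•(−2xz² − 4x³, 4y³, −2zx²) + b•(y, x, 0). Then closure(M) ∩ V ⊆ {(0,0,0)}; that is, the closure of M(f) \ V meets V at most in the origin. -/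
/-- Example 4.1, Milnor set condition: for `f(x,y,z) = (y⁴ − z²x² − x⁴, xy)` with
`V = {x = y = 0}`, the set `M` of points outside `V` where the position vector lies in
the span of the gradients `∇f₁, ∇f₂` satisfies `closure M ∩ V ⊆ {0}`. -/
theorem example_real_mapping_milnor_set_condition
    (M V : Set (ℝ × ℝ × ℝ))
    (hM : M = {p : ℝ × ℝ × ℝ | (p.1, p.2.1) ≠ (0, 0) ∧ ∃ a b : ℝ,
      p = a • ((-2 * p.1 * p.2.2 ^ 2 - 4 * p.1 ^ 3, 4 * p.2.1 ^ 3,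
            -2 * p.2.2 * p.1 ^ 2) : ℝ × ℝ × ℝ)
          + b • ((p.2.1, p.1, 0) : ℝ × ℝ × ℝ)})
    (hV : V = {p : ℝ × ℝ × ℝ | p.1 = 0 ∧ p.2.1 = 0}) :
    closure M ∩ V ⊆ {(0, 0, 0)} := by
  have hsub : M ⊆ {p : ℝ × ℝ × ℝ | p.2.2 = 0} := by
    rw [hM]
    rintro ⟨x, y, z⟩ ⟨_, a, b, h⟩
    simp only [Prod.smul_mk, Prod.mk_add_mk, Prod.mk.injEq, smul_eq_mul] at h
    obtain ⟨h1, h2, h3⟩ := h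
    show z = 0
    by_contra hz
    have h4 : -2 * a * x ^ 2 = 1 := by
      apply mul_left_cancel₀ hz
      linarith
    have ha : a ≤ 0 := by
      by_contra hc
      push Not at hc
      nlinarith [mul_nonneg hc.le (sq_nonneg x)]
    have e1 : x ^ 2 = z ^ 2 + 2 * x ^ 2 + b * x * y := by
      linear_combination x * h1 + (z ^ 2 + 2 * x ^ 2) * h4
    have e2 : y ^ 2 = 4 * a * y ^ 4 + b * x * y := by
      linear_combination y * h2
    have h5 : a * y ^ 4 ≤ 0 := mul_nonpos_of_nonpos_of_nonneg ha (by positivity)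
    have h6 : 0 < z ^ 2 := by positivity
    nlinarith [sq_nonneg x, sq_nonneg y]
  have hcl : IsClosed {p : ℝ × ℝ × ℝ | p.2.2 = 0} :=
    isClosed_eq (by fun_prop) continuous_const
  rintro ⟨x, y, z⟩ ⟨hp, hv⟩
  have hz : z = 0 := closure_minimal hsub hcl hp
  rw [hV] at hv
  obtain ⟨hx, hy⟩ := hv
  simp only at hx hy
  simp [hx, hy, hz]
end

section
/- (Proposition 4.2, singular locus of a Thom–Sebastiani sum.) Let ψ : ℝ^m → ℝ^p and φ : ℝ^n → ℝ^p be differentiable mappings such that Sing ψ ⊆ ψ⁻¹(0) and Sing φ ⊆ φ⁻¹(0), i.e. Dψ(x) is surjective whenever ψ(x) ≠ 0 and Dφ(y) is surjective whenever φ(y) ≠ 0. Define h : ℝ^m × ℝ^n → ℝ^p by h(x,y) = ψ(x) + φ(y). Then Sing h ⊆ h⁻¹(0): whenever the real Fréchet derivative Dh(x,y) : ℝ^m × ℝ^n → ℝ^p is not surjective, one has ψ(x) + φ(y) = 0. -/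
/-- Proposition 4.2, singular locus of a Thom–Sebastiani sum: if `Sing ψ ⊆ ψ⁻¹(0)` and
`Sing φ ⊆ φ⁻¹(0)`, then the sum in separate variables `h(x,y) = ψ(x) + φ(y)` satisfies
`Sing h ⊆ h⁻¹(0)`: whenever `Dh(x,y)` is not surjective, `ψ(x) + φ(y) = 0`. -/
theorem singular_locus_of_thom_sebastiani_sum
    (m n p : ℕ)
    (ψ : EuclideanSpace ℝ (Fin m) → EuclideanSpace ℝ (Fin p))
    (φ : EuclideanSpace ℝ (Fin n) → EuclideanSpace ℝ (Fin p))
    (hψd : Differentiable ℝ ψ) (hφd : Differentiable ℝ φ)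
    (hψ : ∀ x, ψ x ≠ 0 → Function.Surjective ⇑(fderiv ℝ ψ x))
    (hφ : ∀ y, φ y ≠ 0 → Function.Surjective ⇑(fderiv ℝ φ y))
    (x : EuclideanSpace ℝ (Fin m)) (y : EuclideanSpace ℝ (Fin n))
    (h : ¬ Function.Surjective
      ⇑(fderiv ℝ
        (fun q : EuclideanSpace ℝ (Fin m) × EuclideanSpace ℝ (Fin n) => ψ q.1 + φ q.2)
        (x, y))) :
    ψ x + φ y = 0 := by
  have h1 : HasFDerivAt
      (fun q : EuclideanSpace ℝ (Fin m) × EuclideanSpace ℝ (Fin n) => ψ q.1 + φ q.2)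
      ((fderiv ℝ ψ x).comp (ContinuousLinearMap.fst ℝ _ _)
        + (fderiv ℝ φ y).comp (ContinuousLinearMap.snd ℝ _ _)) (x, y) :=
    HasFDerivAt.add
      (HasFDerivAt.comp (x, y) (hψd x).hasFDerivAt hasFDerivAt_fst)
      (HasFDerivAt.comp (x, y) (hφd y).hasFDerivAt hasFDerivAt_snd)
  rw [h1.fderiv] at h
  have hx : ψ x = 0 := by
    by_contra hne
    refine h fun w => ?_
    obtain ⟨u, hu⟩ := hψ x hne w
    exact ⟨(u, 0), by simp [hu]⟩
  have hy : φ y = 0 := by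
    by_contra hne
    refine h fun w => ?_
    obtain ⟨v, hv⟩ := hφ y hne w
    exact ⟨(0, v), by simp [hv]⟩
  rw [hx, hy, add_zero]
end

section
/- (Example 4.3, Thom (a_f)-regularity along V \ {0}.) Let f : ℝ³ → ℝ², f(x,y,z) = (y⁴ − z²·x² − x⁴, x·y), with V = f⁻¹(0) = {x = y = 0} and gradients ∇f₁(x,y,z) = (−2xz² − 4x³, 4y³, −2zx²), ∇f₂(x,y,z) = (y, x, 0). Then for every z₀ ∈ ℝ with z₀ ≠ 0, every sequence p_k ∈ ℝ³ with p_k ∉ V converging to (0,0,z₀), and every sequences a_k, b_k ∈ ℝ such that the normal vectors u_k := a_k•∇f₁(p_k) + b_k•∇f₂(p_k) satisfy ‖u_k‖ = 1 and u_k converges to a vector u ∈ ℝ³, the limit u is orthogonal to the tangent direction (0,0,1) of V, i.e. the third component of u is zero. (Equivalently, f satisfies the Thom (a_f)-regularity condition at V \ {0}.) -/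
/-- Example 4.3, Thom `(a_f)`-regularity along `V \ {0}` for
`f(x,y,z) = (y⁴ − z²x² − x⁴, xy)`: along any sequence `p_k ∉ V` converging to
`(0,0,z₀)`, `z₀ ≠ 0`, every convergent sequence of unit normal vectors
`u_k = a_k ∇f₁(p_k) + b_k ∇f₂(p_k)` has limit orthogonal to the tangent direction
`(0,0,1)` of `V`, i.e. its third component vanishes. -/
theorem example_thom_regularity
    (V : Set (EuclideanSpace ℝ (Fin 3)))
    (hV : V = {p : EuclideanSpace ℝ (Fin 3) | p 0 = 0 ∧ p 1 = 0})
    (g1 g2 : EuclideanSpace ℝ (Fin 3) → EuclideanSpace ℝ (Fin 3))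
    (hg1 : ∀ p : EuclideanSpace ℝ (Fin 3), ∀ i : Fin 3,
      g1 p i = ![-2 * p 0 * (p 2) ^ 2 - 4 * (p 0) ^ 3, 4 * (p 1) ^ 3,
        -2 * p 2 * (p 0) ^ 2] i)
    (hg2 : ∀ p : EuclideanSpace ℝ (Fin 3), ∀ i : Fin 3, g2 p i = ![p 1, p 0, 0] i)
    (z₀ : ℝ) (hz₀ : z₀ ≠ 0)
    (pt : EuclideanSpace ℝ (Fin 3)) (hpt : ∀ i : Fin 3, pt i = ![0, 0, z₀] i)
    (pk : ℕ → EuclideanSpace ℝ (Fin 3)) (hpk : ∀ k, pk k ∉ V)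
    (hlim : Filter.Tendsto pk Filter.atTop (nhds pt))
    (a b : ℕ → ℝ) (u : ℕ → EuclideanSpace ℝ (Fin 3))
    (hu : ∀ k, u k = a k • g1 (pk k) + b k • g2 (pk k))
    (hnorm : ∀ k, ‖u k‖ = 1)
    (ulim : EuclideanSpace ℝ (Fin 3))
    (hul : Filter.Tendsto u Filter.atTop (nhds ulim)) :
    ulim 2 = 0 := by
  have hc : ∀ (i : Fin 3) {w : ℕ → EuclideanSpace ℝ (Fin 3)} {l : EuclideanSpace ℝ (Fin 3)},
      Filter.Tendsto w Filter.atTop (nhds l) →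
      Filter.Tendsto (fun k => w k i) Filter.atTop (nhds (l i)) := by
    intro i w l h
    have hcont : Continuous (fun v : EuclideanSpace ℝ (Fin 3) => v i) := by fun_prop
    exact (hcont.tendsto l).comp h
  have key : ∀ k, |u k 2 * pk k 2| ≤ |pk k 0 * u k 0 - pk k 1 * u k 1| := by
    intro k
    have h0 : u k 0 = a k * (-2 * pk k 0 * (pk k 2) ^ 2 - 4 * (pk k 0) ^ 3)
        + b k * pk k 1 := by
      rw [hu k]; simp [hg1, hg2]
    have h1 : u k 1 = a k * (4 * (pk k 1) ^ 3) + b k * pk k 0 := by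
      rw [hu k]; simp [hg1, hg2]
    have h2 : u k 2 = a k * (-2 * pk k 2 * (pk k 0) ^ 2) := by
      rw [hu k]; simp [hg1, hg2]
    have e1 : u k 2 * pk k 2 = -(a k * (2 * (pk k 0 * pk k 2) ^ 2)) := by
      rw [h2]; ring
    have e2 : pk k 0 * u k 0 - pk k 1 * u k 1 =
        -(a k * (2 * (pk k 0 * pk k 2) ^ 2 + 4 * (pk k 0) ^ 4 + 4 * (pk k 1) ^ 4)) := by
      rw [h0, h1]; ring
    rw [e1, e2, abs_neg, abs_neg, abs_mul (a k), abs_mul (a k)]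
    apply mul_le_mul_of_nonneg_left _ (abs_nonneg _)
    rw [abs_of_nonneg (by positivity), abs_of_nonneg (by positivity)]
    have : 0 ≤ (pk k 0) ^ 4 := by positivity
    have : 0 ≤ (pk k 1) ^ 4 := by positivity
    linarith
  have hL := ((hc 2 hul).mul (hc 2 hlim)).abs
  have hR := (((hc 0 hlim).mul (hc 0 hul)).sub ((hc 1 hlim).mul (hc 1 hul))).abs
  have hle := le_of_tendsto_of_tendsto' hL hR key
  have p0 : pt 0 = 0 := by simpa using hpt 0
  have p1 : pt 1 = 0 := by simpa using hpt 1
  have p2 : pt 2 = z₀ := by simpa using hpt 2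
  rw [p0, p1, p2] at hle
  have hz : ulim 2 * z₀ = 0 := by
    apply abs_eq_zero.mp
    apply le_antisymm _ (abs_nonneg _)
    simpa using hle
  exact (mul_eq_zero.mp hz).resolve_right hz₀
end

section
/- Let ψ : ℝ^m → ℝ^p be differentiable at a point x with ψ(x) ≠ 0, and suppose the real Fréchet derivative Dψ(x) : ℝ^m → ℝ^p is surjective. Let θ(y) = ‖ψ(y)‖⁻¹ • ψ(y). Then the range of Dθ(x) equals the tangent space of the unit sphere at θ(x), namely range Dθ(x) = {w ∈ ℝ^p : ⟪w, ψ(x)⟫ = 0}. -/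
open scoped RealInnerProductSpace

/-- If `Dψ(x)` is surjective and `ψ x ≠ 0`, then the range of the derivative of
`θ = ψ/‖ψ‖` at `x` is the tangent space of the unit sphere at `θ x`, i.e.
`{w : ⟪w, ψ x⟫ = 0}`. -/
theorem range_fderiv_normalized_eq_tangent_space
    (m p : ℕ) (ψ : EuclideanSpace ℝ (Fin m) → EuclideanSpace ℝ (Fin p))
    (x : EuclideanSpace ℝ (Fin m)) (hdiff : DifferentiableAt ℝ ψ x) (hx : ψ x ≠ 0)
    (hsurj : Function.Surjective ⇑(fderiv ℝ ψ x)) :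
    Set.range ⇑(fderiv ℝ (fun y => ‖ψ y‖⁻¹ • ψ y) x)
      = {w : EuclideanSpace ℝ (Fin p) | ⟪w, ψ x⟫ = 0} := by
  have hN : DifferentiableAt ℝ (fun y => ‖ψ y‖⁻¹) x :=
    (hdiff.norm ℝ hx).inv (norm_ne_zero_iff.mpr hx)
  have hn : ‖ψ x‖ ≠ 0 := norm_ne_zero_iff.mpr hx
  have hθ : DifferentiableAt ℝ (fun y => ‖ψ y‖⁻¹ • ψ y) x := hN.smul hdiff
  have hform : ∀ v, fderiv ℝ (fun y => ‖ψ y‖⁻¹ • ψ y) x v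
      = ‖ψ x‖⁻¹ • fderiv ℝ ψ x v + (fderiv ℝ (fun y => ‖ψ y‖⁻¹) x v) • ψ x := by
    intro v
    rw [fderiv_fun_smul hN hdiff]
    simp
  have horth : ∀ v, ⟪fderiv ℝ (fun y => ‖ψ y‖⁻¹ • ψ y) x v, ψ x⟫ = 0 := by
    intro v
    have hev : (fun y => ‖‖ψ y‖⁻¹ • ψ y‖ ^ 2) =ᶠ[nhds x] fun _ => (1 : ℝ) := by
      filter_upwards [hdiff.continuousAt.eventually_ne hx] with y hy
      have : ‖ψ y‖ ≠ 0 := norm_ne_zero_iff.mpr hy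
      rw [norm_smul, norm_inv, norm_norm, inv_mul_cancel₀ this, one_pow]
    have h1 := hθ.hasFDerivAt.norm_sq.fderiv
    rw [hev.fderiv_eq, fderiv_fun_const] at h1
    have h2 := congrArg (fun L => L v) h1
    simp [hx] at h2
    rw [real_inner_comm]
    exact h2
  ext w
  simp only [Set.mem_range, Set.mem_ofPred_eq]
  constructor
  · rintro ⟨v, rfl⟩
    exact horth v
  · intro hw
    obtain ⟨v, hv⟩ := hsurj (‖ψ x‖ • w)
    refine ⟨v, ?_⟩
    have h := horth v
    rw [hform, hv, smul_smul, inv_mul_cancel₀ hn, one_smul] at h ⊢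
    rw [inner_add_left, hw, zero_add, inner_smul_left, real_inner_self_eq_norm_sq] at h
    have h0 : fderiv ℝ (fun y => ‖ψ y‖⁻¹) x v = 0 := by
      simpa [hx] using h
    rw [h0, zero_smul, add_zero]
end
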